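/- Let ℓ ∈ ℕ and α = ℓ + 1/2, n ∈ ℕ, m = (m₁,…,mₙ) ∈ ℕⁿ with m₁,…,mₙ pairwise distinct, and t = (t₁,…,tₙ) ∈ ℝⁿ. With C^{(α)}_i the classical Gegenbauer polynomials, define ρ_{ij}(z) = ∫_{-1}^{z} C^{(α)}_i(u)·C^{(α)}_j(u)·(1-u²)^{ℓ} du, let R_m(z) be the n×n matrix with entries [R_m(z)]_{kℓ'} = δ_{kℓ'} + t_{ℓ'}·ρ_{m_k m_{ℓ'}}(z), τ_m(z) = det R_m(z), and define C_{m;i}(z) = Σ_{j=1}^{n+1} [adj R_{(m,i)}(z)]_{n+1,j}·C^{(α)}_{μ_j}(z) where μ = (m₁,…,mₙ,i) and R_{(m,i)}(z) is the (n+1)×(n+1) matrix with entries δ_{kℓ'} + s_{ℓ'}·ρ_{μ_k μ_{ℓ'}}(z), s_{ℓ'} = t_{ℓ'} for ℓ' ≤ n and s_{n+1} = 0. Set ν_i = π·2^{1-2α}·Γ(i+2α)/(i!·(i+α)·Γ(α)²). Then: (1) τ_m(z) ≠ 0 for all z ∈ [-1,1] if and only if t_j > -ν_{m_j}⁻¹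 for all j = 1,…,n; and (2) if this condition holds, then for every i ∈ ℕ, ∫_{-1}^{1} C_{m;i}(z)²·(1-z²)^{ℓ}/τ_m(z)² dz = ν_i/(1 + δ_{i,m}·t_{j(i)}·ν_i), where δ_{i,m} = 1 and t_{j(i)} is the parameter with m_{j(i)} = i when i ∈ {m₁,…,mₙ}, and δ_{i,m} = 0 otherwise. -/

import Mathlib

/-- The classical Gegenbauer polynomial
`C^{(α)}_i(z) = ∑_{k=0}^{⌊i/2⌋} (-1)^k Γ(i-k+α)/(Γ(α)k!(i-2k)!) (2z)^{i-2k}`. -/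
noncomputable def gegenC (α : ℝ) (i : ℕ) (z : ℝ) : ℝ :=
  ∑ k ∈ Finset.range (i / 2 + 1),
    (-1 : ℝ) ^ k * Real.Gamma ((i : ℝ) - k + α)
      / (Real.Gamma α * (Nat.factorial k) * (Nat.factorial (i - 2 * k)))
      * (2 * z) ^ (i - 2 * k)

/-- `ρ_{ij}(z) = ∫_{-1}^z C^{(α)}_i C^{(α)}_j (1-u²)^ℓ du`, for `α = ℓ + 1/2`. -/
noncomputable def rhoGegen (ℓ : ℕ) (i j : ℕ) (z : ℝ) : ℝ :=
  ∫ u in (-1 : ℝ)..z,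
    gegenC ((ℓ : ℝ) + 1/2) i u * gegenC ((ℓ : ℝ) + 1/2) j u * (1 - u ^ 2) ^ ℓ

/-- The `n × n` matrix `R_m(z)` with entries `δ_{kl} + t_l ρ_{m_k m_l}(z)`. -/
noncomputable def rMat (ℓ n : ℕ) (m : ℕ → ℕ) (t : ℕ → ℝ) (z : ℝ) :
    Matrix (Fin n) (Fin n) ℝ :=
  Matrix.of fun k l =>
    (if k = l then (1 : ℝ) else 0) + t (l.1 + 1) * rhoGegen ℓ (m (k.1 + 1)) (m (l.1 + 1)) z

/-- The τ-function `τ_m(z) = det R_m(z)`. -/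
noncomputable def tauMat (ℓ n : ℕ) (m : ℕ → ℕ) (t : ℕ → ℝ) (z : ℝ) : ℝ :=
  (rMat ℓ n m t z).det

/-- The exceptional Gegenbauer polynomial of the second kind, via the adjugate of
the bordered matrix `R_{(m,i)}`. -/
noncomputable def xGegenC (ℓ n : ℕ) (m : ℕ → ℕ) (t : ℕ → ℝ) (i : ℕ) (z : ℝ) : ℝ :=
  ∑ j : Fin (n + 1),
    (rMat ℓ (n + 1) (fun a => if a ≤ n then m a else i)
        (fun a => if a ≤ n then t a else 0) z).adjugate (Fin.last n) j
      * gegenC ((ℓ : ℝ) + 1/2) (if j.1 + 1 ≤ n then m (j.1 + 1) else i) z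

/-- The squared norm `ν_i = π 2^{1-2α} Γ(i+2α)/(i!(i+α)Γ(α)²)` of the classical
Gegenbauer polynomial, for `α = ℓ + 1/2`. -/
noncomputable def nuGegen (ℓ : ℕ) (i : ℕ) : ℝ :=
  Real.pi * (2 : ℝ) ^ (1 - 2 * ((ℓ : ℝ) + 1/2)) * Real.Gamma ((i : ℝ) + 2 * ((ℓ : ℝ) + 1/2))
    / ((Nat.factorial i : ℝ) * ((i : ℝ) + ((ℓ : ℝ) + 1/2)) * (Real.Gamma ((ℓ : ℝ) + 1/2)) ^ 2)

open Polynomial in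
/-- The Gegenbauer polynomial as an element of `ℝ[X]`. -/
noncomputable def gegenPoly (α : ℝ) (i : ℕ) : ℝ[X] :=
  ∑ k ∈ Finset.range (i / 2 + 1),
    C ((-1 : ℝ) ^ k * Real.Gamma ((i : ℝ) - k + α)
      / (Real.Gamma α * (Nat.factorial k) * (Nat.factorial (i - 2 * k)))
      * 2 ^ (i - 2 * k)) * X ^ (i - 2 * k)

theorem eval_gegenPoly (α : ℝ) (i : ℕ) (z : ℝ) :
    (gegenPoly α i).eval z = gegenC α i z := by
  simp [gegenPoly, gegenC, Polynomial.eval_finsetSum, mul_pow, mul_assoc]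

theorem derivative_gegenPoly {α : ℝ} (hα : 0 < α) (i : ℕ) :
    Polynomial.derivative (gegenPoly α (i + 1)) =
      Polynomial.C (2 * α) * gegenPoly (α + 1) i := by
  have hsub : Finset.range (i / 2 + 1) ⊆ Finset.range ((i + 1) / 2 + 1) := by
    intro x; simp only [Finset.mem_range]; omega
  rw [gegenPoly, gegenPoly, Polynomial.derivative_sum, Finset.mul_sum]
  rw [← Finset.sum_subset hsub]
  · refine Finset.sum_congr rfl fun k hk => ?_
    have hk' : 2 * k ≤ i := by rw [Finset.mem_range] at hk; omega
    obtain ⟨p, rfl⟩ := Nat.exists_eq_add_of_le hk'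
    rw [Polynomial.derivative_C_mul_X_pow, ← mul_assoc, ← Polynomial.C_mul]
    have e1 : 2 * k + p + 1 - 2 * k = p + 1 := by omega
    have e2 : 2 * k + p - 2 * k = p := by omega
    rw [e1, e2, Nat.add_sub_cancel]
    congr 2
    rw [Real.Gamma_add_one hα.ne', Nat.factorial_succ]
    have h1 := (Real.Gamma_pos_of_pos hα).ne'
    have h2 : ((2 * k + p + 1 : ℕ) : ℝ) - k + α = ((2 * k + p : ℕ) : ℝ) - k + (α + 1) := by
      push_cast; ring
    rw [h2]
    push_cast
    have h3 : (p : ℝ) + 1 ≠ 0 := by positivity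
    field_simp
    ring
  · intro k hk hk'
    rw [Finset.mem_range] at hk hk'
    have : i + 1 - 2 * k = 0 := by omega
    simp [this]

open Polynomial in
/-- The Gegenbauer differential equation. -/
theorem gegenPoly_ode {α : ℝ} (hα : 0 < α) (i : ℕ) :
    (1 - X ^ 2) * derivative (derivative (gegenPoly α i))
      - C (2 * α + 1) * X * derivative (gegenPoly α i)
      + C ((i : ℝ) * (i + 2 * α)) * gegenPoly α i = 0 := by
  set a : ℕ → ℝ := fun k => (-1 : ℝ) ^ k * Real.Gamma ((i : ℝ) - k + α)
      / (Real.Gamma α * (Nat.factorial k) * (Nat.factorial (i - 2 * k)))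
      * 2 ^ (i - 2 * k) with ha
  set G : ℕ → ℝ[X] := fun k => Nat.casesOn k 0 fun k =>
    -C (a k * ((i - 2 * k : ℕ) : ℝ) * ((i - 2 * k - 1 : ℕ) : ℝ)) * X ^ (i - 2 * k - 2) with hG
  have hGeq : ∀ k, 2 * k ≤ i → G k = C (4 * k * (i - k + α) * a k) * X ^ (i - 2 * k) := by
    intro k hk
    cases k with
    | zero => simp [hG]
    | succ k =>
      obtain ⟨p, rfl⟩ := Nat.exists_eq_add_of_le hk
      have e1 : 2 * (k + 1) + p - 2 * k = p + 2 := by omega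
      have e2 : 2 * (k + 1) + p - 2 * (k + 1) = p := by omega
      have e3 : p + 2 - 1 = p + 1 := by omega
      simp only [hG, ha, e1, e2, e3, Nat.add_sub_cancel]
      rw [← C_neg]
      congr 2
      have h1 := (Real.Gamma_pos_of_pos hα).ne'
      have h2 : ((2 * (k + 1) + p : ℕ) : ℝ) - k + α
          = (((2 * (k + 1) + p : ℕ) : ℝ) - (k + 1 : ℕ) + α) + 1 := by
        push_cast; ring
      have h0 : ((2 * (k + 1) + p : ℕ) : ℝ) - (k + 1 : ℕ) + α ≠ 0 := by
        have : ((2 * (k + 1) + p : ℕ) : ℝ) - (k + 1 : ℕ) + α = k + 1 + p + α := by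
          push_cast; ring
        rw [this]; positivity
      rw [h2, Real.Gamma_add_one h0, Nat.factorial_succ k, Nat.factorial_succ (p + 1),
        Nat.factorial_succ p]
      have h3 : (p : ℝ) + 1 ≠ 0 := by positivity
      have h4 : (p : ℝ) + 1 + 1 ≠ 0 := by positivity
      have h5 : (k : ℝ) + 1 ≠ 0 := by positivity
      push_cast
      field_simp
      ring
  have key : ∀ k ∈ Finset.range (i / 2 + 1),
      (1 - X ^ 2) * derivative (derivative (C (a k) * X ^ (i - 2 * k)))
      - C (2 * α + 1) * X * derivative (C (a k) * X ^ (i - 2 * k))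
      + C ((i : ℝ) * (i + 2 * α)) * (C (a k) * X ^ (i - 2 * k)) = G k - G (k + 1) := by
    intro k hk
    have hk' : 2 * k ≤ i := by rw [Finset.mem_range] at hk; omega
    rw [hGeq k hk']
    simp only [hG]
    obtain ⟨p, rfl⟩ := Nat.exists_eq_add_of_le hk'
    have e2 : 2 * k + p - 2 * k = p := by omega
    simp only [e2]
    generalize a k = b
    have c2 : (C 2 : ℝ[X]) = 2 := rfl
    have c4 : (C 4 : ℝ[X]) = 4 := rfl
    rcases p with _ | _ | p <;>
    · simp only [derivative_C_mul_X_pow, Nat.add_sub_cancel]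
      simp [c2, c4, -mul_eq_mul_right_iff]
      ring
  have hsum : gegenPoly α i = ∑ k ∈ Finset.range (i / 2 + 1), C (a k) * X ^ (i - 2 * k) := rfl
  rw [hsum, derivative_sum, derivative_sum, Finset.mul_sum, Finset.mul_sum, Finset.mul_sum,
    ← Finset.sum_sub_distrib, ← Finset.sum_add_distrib, Finset.sum_congr rfl key,
    Finset.sum_range_sub']
  have hlast : ((i - 2 * (i / 2) : ℕ) : ℝ) * ((i - 2 * (i / 2) - 1 : ℕ) : ℝ) = 0 := by
    have h : i - 2 * (i / 2) = 0 ∨ i - 2 * (i / 2) = 1 := by omega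
    rcases h with h | h <;> simp [h]
  simp only [hG, mul_assoc, hlast]
  simp

open Polynomial in
/-- Integration by parts in the Gegenbauer differential equation. -/
theorem integral_gegenPoly_mul (ℓ i : ℕ) (q : ℝ[X]) :
    (i : ℝ) * (i + 2 * ((ℓ : ℝ) + 1 / 2)) *
        ∫ u in (-1 : ℝ)..1, (gegenPoly ((ℓ : ℝ) + 1 / 2) i).eval u * q.eval u * (1 - u ^ 2) ^ ℓ =
      ∫ u in (-1 : ℝ)..1, (derivative (gegenPoly ((ℓ : ℝ) + 1 / 2) i)).eval u *
        (derivative q).eval u * (1 - u ^ 2) ^ (ℓ + 1) := by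
  set p := gegenPoly ((ℓ : ℝ) + 1 / 2) i with hp
  have hderiv : ∀ u : ℝ, HasDerivAt
      (fun u => -((1 - u ^ 2) ^ (ℓ + 1) * (derivative p).eval u * q.eval u))
      ((i : ℝ) * (i + 2 * ((ℓ : ℝ) + 1 / 2)) * (p.eval u * q.eval u * (1 - u ^ 2) ^ ℓ)
        - (derivative p).eval u * (derivative q).eval u * (1 - u ^ 2) ^ (ℓ + 1)) u := by
    intro u
    have hw : HasDerivAt (fun u : ℝ => (1 - u ^ 2) ^ (ℓ + 1))
        (((ℓ + 1 : ℕ) : ℝ) * (1 - u ^ 2) ^ ℓ * (-(2 * u))) u := by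
      refine ((((hasDerivAt_id u).pow 2).const_sub 1).pow (ℓ + 1)).congr_deriv ?_
      simp
    have h := ((hw.mul ((derivative p).hasDerivAt u)).mul (q.hasDerivAt u)).neg
    refine h.congr_deriv ?_
    have hode := congrArg (Polynomial.eval u)
      (gegenPoly_ode (α := (ℓ : ℝ) + 1 / 2) (by positivity) i)
    rw [← hp] at hode
    simp only [eval_add, eval_sub, eval_mul, eval_pow, eval_X, eval_C, eval_one, eval_zero]
      at hode
    simp only [Pi.mul_apply]
    push_cast
    linear_combination (-(1 - u ^ 2) ^ ℓ * eval u q) * hode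
  have hint := intervalIntegral.integral_eq_sub_of_hasDerivAt (a := (-1 : ℝ)) (b := 1)
    (fun u _ => hderiv u) (Continuous.intervalIntegrable (by fun_prop) _ _)
  rw [intervalIntegral.integral_sub (Continuous.intervalIntegrable (by fun_prop) _ _)
    (Continuous.intervalIntegrable (by fun_prop) _ _),
    intervalIntegral.integral_const_mul] at hint
  norm_num at hint
  norm_num
  linarith

theorem continuous_gegenC (α : ℝ) (i : ℕ) : Continuous (gegenC α i) := by
  simp only [← funext (eval_gegenPoly α i)]
  fun_prop

theorem rhoGegen_comm (ℓ i j : ℕ) (z : ℝ) : rhoGegen ℓ i j z = rhoGegen ℓ j i z := by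
  simp only [rhoGegen, mul_comm (gegenC _ i _)]

theorem rhoGegen_neg_one (ℓ i j : ℕ) : rhoGegen ℓ i j (-1) = 0 := by
  simp [rhoGegen]

theorem hasDerivAt_rhoGegen (ℓ i j : ℕ) (z : ℝ) :
    HasDerivAt (rhoGegen ℓ i j)
      (gegenC ((ℓ : ℝ) + 1 / 2) i z * gegenC ((ℓ : ℝ) + 1 / 2) j z * (1 - z ^ 2) ^ ℓ) z := by
  have h1 := continuous_gegenC ((ℓ : ℝ) + 1 / 2) i
  have h2 := continuous_gegenC ((ℓ : ℝ) + 1 / 2) j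
  have hc : Continuous fun u =>
    gegenC ((ℓ : ℝ) + 1 / 2) i u * gegenC ((ℓ : ℝ) + 1 / 2) j u * (1 - u ^ 2) ^ ℓ := by fun_prop
  exact intervalIntegral.integral_hasDerivAt_right (hc.intervalIntegrable _ _)
    hc.stronglyMeasurable.stronglyMeasurableAtFilter hc.continuousAt

theorem rhoGegen_one_of_ne (ℓ : ℕ) {i j : ℕ} (hij : i ≠ j) : rhoGegen ℓ i j 1 = 0 := by
  set α := (ℓ : ℝ) + 1 / 2 with hα
  have hi := integral_gegenPoly_mul ℓ i (gegenPoly α j)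
  have hj := integral_gegenPoly_mul ℓ j (gegenPoly α i)
  simp only [← hα, eval_gegenPoly] at hi hj
  have hi' : (i : ℝ) * (i + 2 * α) * rhoGegen ℓ i j 1 = _ := hi
  have hj' : (j : ℝ) * (j + 2 * α) * rhoGegen ℓ j i 1 = _ := hj
  simp only [mul_comm (Polynomial.eval _ (Polynomial.derivative (gegenPoly α j)))] at hj'
  rw [rhoGegen_comm, ← hi'] at hj'
  have hfac : ((j : ℝ) - i) * ((j + i + 2 * α) * rhoGegen ℓ i j 1) = 0 := by
    linear_combination hj'
  have hne : (j : ℝ) - i ≠ 0 := sub_ne_zero.2 (by exact_mod_cast hij.symm)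
  have hpos : (j : ℝ) + i + 2 * α ≠ 0 := by positivity
  simpa [hne, hpos] using hfac

theorem nuGegen_pos (ℓ i : ℕ) : 0 < nuGegen ℓ i := by
  have h1 : 0 < Real.Gamma ((ℓ : ℝ) + 1 / 2) := Real.Gamma_pos_of_pos (by positivity)
  have h2 : 0 < Real.Gamma ((i : ℝ) + 2 * ((ℓ : ℝ) + 1 / 2)) :=
    Real.Gamma_pos_of_pos (by positivity)
  rw [nuGegen]
  positivity

theorem nuGegen_succ (ℓ i : ℕ) :
    ((i : ℝ) + 1) * (i + 1 + 2 * ((ℓ : ℝ) + 1 / 2)) * nuGegen ℓ (i + 1) =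
      (2 * ((ℓ : ℝ) + 1 / 2)) ^ 2 * nuGegen (ℓ + 1) i := by
  have h0 := (Real.Gamma_pos_of_pos (show 0 < (ℓ : ℝ) + 1 / 2 by positivity)).ne'
  simp only [nuGegen]
  have e1 : (((ℓ + 1 : ℕ) : ℝ) + 1 / 2) = ((ℓ : ℝ) + 1 / 2) + 1 := by push_cast; ring
  rw [e1]
  generalize hα : (ℓ : ℝ) + 1 / 2 = α at *
  have hpos : 0 < α := by rw [← hα]; positivity
  have e2 : (i : ℝ) + 2 * (α + 1) = (((i + 1 : ℕ) : ℝ) + 2 * α) + 1 := by push_cast; ring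
  have e3 : (1 - 2 * (α + 1) : ℝ) = (1 - 2 * α) - (2 : ℕ) := by push_cast; ring
  rw [e2, Real.Gamma_add_one (by positivity), Real.Gamma_add_one hpos.ne', e3,
    Real.rpow_sub_natCast (by norm_num), Nat.factorial_succ]
  push_cast
  have h5 : (i : ℝ) + 1 + α ≠ 0 := by positivity
  have h6 : (i : ℝ) + (α + 1) ≠ 0 := by positivity
  have h7 : (i : ℝ) + 1 ≠ 0 := by positivity
  field_simp
  ring

theorem nuGegen_zero_zero : nuGegen 0 0 = 2 := by
  simp only [nuGegen]
  norm_num [Real.Gamma_one_half_eq]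
  rw [Real.sq_sqrt Real.pi_pos.le]
  field_simp

theorem nuGegen_succ_zero (ℓ : ℕ) :
    (2 * (ℓ : ℝ) + 3) * nuGegen (ℓ + 1) 0 = (2 * ℓ + 2) * nuGegen ℓ 0 := by
  have h0 := (Real.Gamma_pos_of_pos (show 0 < (ℓ : ℝ) + 1 / 2 by positivity)).ne'
  simp only [nuGegen]
  have e1 : (((ℓ + 1 : ℕ) : ℝ) + 1 / 2) = ((ℓ : ℝ) + 1 / 2) + 1 := by push_cast; ring
  rw [e1, show 2 * (ℓ : ℝ) + 3 = 2 * ((ℓ : ℝ) + 1 / 2) + 2 by ring,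
    show 2 * (ℓ : ℝ) + 2 = 2 * ((ℓ : ℝ) + 1 / 2) + 1 by ring]
  generalize hα : (ℓ : ℝ) + 1 / 2 = α at *
  have hpos : 0 < α := by rw [← hα]; positivity
  have e2 : ((0 : ℕ) : ℝ) + 2 * (α + 1) = (2 * α + 1) + 1 := by push_cast; ring
  have e3 : (1 - 2 * (α + 1) : ℝ) = (1 - 2 * α) - (2 : ℕ) := by push_cast; ring
  rw [e2, Real.Gamma_add_one (by positivity), Real.Gamma_add_one (by positivity),
    Real.Gamma_add_one hpos.ne', e3, Real.rpow_sub_natCast (by norm_num)]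
  simp only [Nat.cast_zero, zero_add, Nat.factorial_zero, Nat.cast_one, one_mul]
  field_simp

theorem gegenC_zero {α : ℝ} (hα : 0 < α) (z : ℝ) : gegenC α 0 z = 1 := by
  have := (Real.Gamma_pos_of_pos hα).ne'
  simp [gegenC, this]

theorem integral_one_sub_sq_pow_eq_nuGegen (ℓ : ℕ) :
    ∫ u in (-1 : ℝ)..1, (1 - u ^ 2) ^ ℓ = nuGegen ℓ 0 := by
  induction ℓ with
  | zero => rw [nuGegen_zero_zero]; norm_num
  | succ ℓ ih =>
    have hderiv : ∀ u : ℝ, HasDerivAt (fun u => u * (1 - u ^ 2) ^ (ℓ + 1))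
        ((2 * (ℓ : ℝ) + 3) * (1 - u ^ 2) ^ (ℓ + 1) - (2 * ℓ + 2) * (1 - u ^ 2) ^ ℓ) u := by
      intro u
      have h := (hasDerivAt_id u).mul ((((hasDerivAt_id u).pow 2).const_sub 1).pow (ℓ + 1))
      refine h.congr_deriv ?_
      simp
      ring
    have hint := intervalIntegral.integral_eq_sub_of_hasDerivAt (a := (-1 : ℝ)) (b := 1)
      (fun u _ => hderiv u) (Continuous.intervalIntegrable (by fun_prop) _ _)
    rw [intervalIntegral.integral_sub (Continuous.intervalIntegrable (by fun_prop) _ _)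
      (Continuous.intervalIntegrable (by fun_prop) _ _),
      intervalIntegral.integral_const_mul, intervalIntegral.integral_const_mul, ih,
      ← nuGegen_succ_zero, ← mul_sub] at hint
    have hne : 2 * (ℓ : ℝ) + 3 ≠ 0 := by positivity
    simp [hne] at hint
    linarith

theorem rhoGegen_one_self (ℓ i : ℕ) : rhoGegen ℓ i i 1 = nuGegen ℓ i := by
  induction i generalizing ℓ with
  | zero =>
    rw [← integral_one_sub_sq_pow_eq_nuGegen, rhoGegen]
    simp [gegenC_zero (show 0 < (ℓ : ℝ) + 2⁻¹ by positivity)]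
  | succ i ih =>
    have hα : 0 < (ℓ : ℝ) + 1 / 2 := by positivity
    have h := integral_gegenPoly_mul ℓ (i + 1) (gegenPoly ((ℓ : ℝ) + 1 / 2) (i + 1))
    simp only [derivative_gegenPoly hα, Polynomial.eval_mul, Polynomial.eval_C,
      eval_gegenPoly] at h
    have hr : rhoGegen ℓ (i + 1) (i + 1) 1 = ∫ u in (-1 : ℝ)..1,
      gegenC ((ℓ : ℝ) + 1 / 2) (i + 1) u * gegenC ((ℓ : ℝ) + 1 / 2) (i + 1) u
        * (1 - u ^ 2) ^ ℓ := rfl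
    have hr' : (2 * ((ℓ : ℝ) + 1 / 2)) ^ 2 * rhoGegen (ℓ + 1) i i 1 = ∫ u in (-1 : ℝ)..1,
        2 * ((ℓ : ℝ) + 1 / 2) * gegenC ((ℓ : ℝ) + 1 / 2 + 1) i u *
          (2 * ((ℓ : ℝ) + 1 / 2) * gegenC ((ℓ : ℝ) + 1 / 2 + 1) i u)
          * (1 - u ^ 2) ^ (ℓ + 1) := by
      rw [rhoGegen, ← intervalIntegral.integral_const_mul]
      refine intervalIntegral.integral_congr fun u _ => ?_
      have e : ((ℓ + 1 : ℕ) : ℝ) + 1 / 2 = (ℓ : ℝ) + 1 / 2 + 1 := by push_cast; ring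
      simp only [e]
      ring
    rw [← hr, ← hr', ih, ← nuGegen_succ] at h
    push_cast at h
    exact mul_left_cancel₀ (by positivity) h

/-- The Gram matrix of `C_{m_1}, …, C_{m_n}` on `[-1, z]`. -/
noncomputable def rhoMat (ℓ n : ℕ) (m : ℕ → ℕ) (z : ℝ) : Matrix (Fin n) (Fin n) ℝ :=
  Matrix.of fun k l => rhoGegen ℓ (m (k.1 + 1)) (m (l.1 + 1)) z

theorem rMat_mulVec (ℓ n : ℕ) (m : ℕ → ℕ) (t : ℕ → ℝ) (z : ℝ) (y : Fin n → ℝ) (k : Fin n) :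
    (rMat ℓ n m t z).mulVec y k = y k + ∑ l : Fin n,
      rhoGegen ℓ (m (k.1 + 1)) (m (l.1 + 1)) z * (t (l.1 + 1) * y l) := by
  simp only [Matrix.mulVec, dotProduct, rMat, Matrix.of_apply, add_mul, Finset.sum_add_distrib]
  simp only [ite_mul, one_mul, zero_mul, Finset.sum_ite_eq, Finset.mem_univ, if_true]
  congr 1
  exact Finset.sum_congr rfl fun l _ => by ring

theorem hasDerivAt_rhoMat_quadForm (ℓ n : ℕ) (m : ℕ → ℕ) (v : Fin n → ℝ) (z : ℝ) :
    HasDerivAt (fun z => ∑ k, ∑ l, v k * v l * rhoMat ℓ n m z k l)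
      ((∑ k : Fin n, v k * gegenC ((ℓ : ℝ) + 1 / 2) (m (k.1 + 1)) z) ^ 2 * (1 - z ^ 2) ^ ℓ) z := by
  have h := HasDerivAt.fun_sum (u := Finset.univ) fun (k : Fin n) _ =>
    HasDerivAt.fun_sum (u := Finset.univ) fun (l : Fin n) _ =>
      (hasDerivAt_rhoGegen ℓ (m (k.1 + 1)) (m (l.1 + 1)) z).const_mul (v k * v l)
  refine h.congr_deriv ?_
  rw [pow_two (∑ k, _), Finset.sum_mul_sum, Finset.sum_mul]
  refine Finset.sum_congr rfl fun k _ => ?_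
  rw [Finset.sum_mul]
  exact Finset.sum_congr rfl fun l _ => by ring

theorem monotoneOn_rhoMat_quadForm (ℓ n : ℕ) (m : ℕ → ℕ) (v : Fin n → ℝ) :
    MonotoneOn (fun z => ∑ k, ∑ l, v k * v l * rhoMat ℓ n m z k l) (Set.Icc (-1) 1) := by
  refine monotoneOn_of_deriv_nonneg (convex_Icc _ _)
    (fun z _ => (hasDerivAt_rhoMat_quadForm ℓ n m v z).continuousAt.continuousWithinAt)
    (fun z _ => (hasDerivAt_rhoMat_quadForm ℓ n m v z).differentiableAt.differentiableWithinAt)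
    fun z hz => ?_
  rw [(hasDerivAt_rhoMat_quadForm ℓ n m v z).deriv]
  rw [interior_Icc, Set.mem_Ioo] at hz
  have : 0 ≤ 1 - z ^ 2 := by nlinarith
  positivity

theorem rhoGegen_one (ℓ i j : ℕ) : rhoGegen ℓ i j 1 = if i = j then nuGegen ℓ i else 0 := by
  split_ifs with h
  · rw [h, rhoGegen_one_self]
  · exact rhoGegen_one_of_ne ℓ h

theorem rhoMat_one (ℓ n : ℕ) (m : ℕ → ℕ)
    (hinj : Function.Injective fun k : Fin n => m (k.1 + 1)) (k l : Fin n) :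
    rhoMat ℓ n m 1 k l = if k = l then nuGegen ℓ (m (k.1 + 1)) else 0 := by
  simp only [rhoMat, Matrix.of_apply, rhoGegen_one]
  exact if_congr hinj.eq_iff rfl rfl

/-- Bessel's inequality for the truncation to `[-1, z]` of a combination of the `C_{m_k}`. -/
theorem sum_sq_div_nuGegen_le (ℓ n : ℕ) (m : ℕ → ℕ)
    (hinj : Function.Injective fun k : Fin n => m (k.1 + 1)) {z : ℝ}
    (hz : z ∈ Set.Icc (-1 : ℝ) 1) (v : Fin n → ℝ) :
    ∑ k, (∑ l, rhoMat ℓ n m z k l * v l) ^ 2 / nuGegen ℓ (m (k.1 + 1)) ≤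
      ∑ k, v k * ∑ l, rhoMat ℓ n m z k l * v l := by
  set x : Fin n → ℝ := fun k => ∑ l, rhoMat ℓ n m z k l * v l with hx
  set y : Fin n → ℝ := fun k => x k / nuGegen ℓ (m (k.1 + 1)) with hy
  have h1 := monotoneOn_rhoMat_quadForm ℓ n m (fun k => v k - y k)
    (Set.left_mem_Icc.2 (by norm_num)) hz hz.1
  have h2 := monotoneOn_rhoMat_quadForm ℓ n m y hz (Set.right_mem_Icc.2 (by norm_num)) hz.2
  simp only [rhoMat_one ℓ n m hinj, mul_ite, mul_zero, Finset.sum_ite_eq, Finset.mem_univ,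
    if_true] at h2
  have h0 : ∀ k l, rhoMat ℓ n m (-1) k l = 0 := fun k l => rhoGegen_neg_one _ _ _
  simp only [h0, mul_zero, Finset.sum_const_zero] at h1
  have hsymm : ∀ k l, rhoMat ℓ n m z k l = rhoMat ℓ n m z l k := fun k l => rhoGegen_comm _ _ _ _
  have hcross : ∑ k, ∑ l, v k * y l * rhoMat ℓ n m z k l =
      ∑ k, ∑ l, y k * v l * rhoMat ℓ n m z k l := by
    rw [Finset.sum_comm]
    refine Finset.sum_congr rfl fun k _ => Finset.sum_congr rfl fun l _ => ?_
    rw [hsymm l k]; ring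
  have hexp : ∑ k, ∑ l, (v k - y k) * (v l - y l) * rhoMat ℓ n m z k l =
      ∑ k, v k * x k - 2 * ∑ k, y k * x k + ∑ k, ∑ l, y k * y l * rhoMat ℓ n m z k l := by
    have e1 : ∑ k, ∑ l, (v k - y k) * (v l - y l) * rhoMat ℓ n m z k l =
      ∑ k, ∑ l, v k * v l * rhoMat ℓ n m z k l - ∑ k, ∑ l, v k * y l * rhoMat ℓ n m z k l
        - ∑ k, ∑ l, y k * v l * rhoMat ℓ n m z k l
        + ∑ k, ∑ l, y k * y l * rhoMat ℓ n m z k l := by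
      simp only [← Finset.sum_sub_distrib, ← Finset.sum_add_distrib]
      exact Finset.sum_congr rfl fun k _ => Finset.sum_congr rfl fun l _ => by ring
    have e2 : ∀ w : Fin n → ℝ, ∑ k, w k * x k = ∑ k, ∑ l, w k * v l * rhoMat ℓ n m z k l := by
      intro w
      simp only [hx, Finset.mul_sum]
      exact Finset.sum_congr rfl fun k _ => Finset.sum_congr rfl fun l _ => by ring
    rw [e1, hcross, e2, e2]
    ring
  have e3 : ∀ k, x k ^ 2 / nuGegen ℓ (m (k.1 + 1)) = y k * x k := fun k => by
    simp only [hy]; ring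
  have e4 : ∀ k, y k * y k * nuGegen ℓ (m (k.1 + 1)) = y k * x k := fun k => by
    have := (nuGegen_pos ℓ (m (k.1 + 1))).ne'
    simp only [hy]; field_simp
  rw [hexp] at h1
  simp only [e4] at h2
  change ∑ k, x k ^ 2 / nuGegen ℓ (m (k.1 + 1)) ≤ ∑ k, v k * x k
  rw [Finset.sum_congr rfl fun k _ => e3 k]
  linarith

theorem tauMat_ne_zero (ℓ n : ℕ) (m : ℕ → ℕ) (t : ℕ → ℝ)
    (hinj : Function.Injective fun k : Fin n => m (k.1 + 1))
    (ht : ∀ k : Fin n, -(nuGegen ℓ (m (k.1 + 1)))⁻¹ < t (k.1 + 1)) {z : ℝ}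
    (hz : z ∈ Set.Icc (-1 : ℝ) 1) : tauMat ℓ n m t z ≠ 0 := by
  intro hdet
  obtain ⟨v, hv0, hv⟩ := Matrix.exists_vecMul_eq_zero_iff.2 hdet
  set x : Fin n → ℝ := fun k => ∑ l, rhoMat ℓ n m z k l * v l with hx
  have hvx : ∀ l, v l = -(t (l.1 + 1) * x l) := by
    intro l
    have h := congrFun hv l
    simp only [Matrix.vecMul, dotProduct, rMat, Matrix.of_apply, mul_add,
      Finset.sum_add_distrib, mul_ite, mul_one, mul_zero, Finset.sum_ite_eq', Finset.mem_univ,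
      if_true, Pi.zero_apply] at h
    have e : ∑ k, v k * (t (l.1 + 1) * rhoGegen ℓ (m (k.1 + 1)) (m (l.1 + 1)) z) =
        t (l.1 + 1) * x l := by
      simp only [hx, Finset.mul_sum]
      refine Finset.sum_congr rfl fun k _ => ?_
      rw [rhoGegen_comm]
      simp only [rhoMat, Matrix.of_apply]
      ring
    linarith
  have hB := sum_sq_div_nuGegen_le ℓ n m hinj hz v
  have hsum : ∑ k, ((nuGegen ℓ (m (k.1 + 1)))⁻¹ + t (k.1 + 1)) * x k ^ 2 ≤ 0 := by
    have e : ∑ k, ((nuGegen ℓ (m (k.1 + 1)))⁻¹ + t (k.1 + 1)) * x k ^ 2 =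
        ∑ k, x k ^ 2 / nuGegen ℓ (m (k.1 + 1)) - ∑ k, v k * x k := by
      rw [← Finset.sum_sub_distrib]
      exact Finset.sum_congr rfl fun k _ => by rw [hvx k]; ring
    rw [e]
    exact sub_nonpos.2 hB
  have hpos : ∀ k : Fin n, 0 < (nuGegen ℓ (m (k.1 + 1)))⁻¹ + t (k.1 + 1) := fun k => by
    linarith [ht k]
  have hnn : ∀ k ∈ Finset.univ,
      0 ≤ ((nuGegen ℓ (m (k.1 + 1)))⁻¹ + t (k.1 + 1)) * x k ^ 2 :=
    fun k _ => mul_nonneg (hpos k).le (sq_nonneg _)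
  have hz0 := (Finset.sum_eq_zero_iff_of_nonneg hnn).1
    (le_antisymm hsum (Finset.sum_nonneg hnn))
  refine hv0 (funext fun k => ?_)
  have hxk : x k = 0 :=
    pow_eq_zero_iff two_ne_zero |>.1 <|
      (mul_eq_zero.1 (hz0 k (Finset.mem_univ k))).resolve_left (hpos k).ne'
  rw [hvx k, hxk]
  simp

theorem xGegenC_eq (ℓ n : ℕ) (m : ℕ → ℕ) (t : ℕ → ℝ) (i : ℕ) (z : ℝ) (y : Fin n → ℝ)
    (hy : (rMat ℓ n m t z).mulVec y = fun k => rhoGegen ℓ (m (k.1 + 1)) i z) :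
    xGegenC ℓ n m t i z = tauMat ℓ n m t z * (gegenC ((ℓ : ℝ) + 1 / 2) i z -
      ∑ k : Fin n, t (k.1 + 1) * y k * gegenC ((ℓ : ℝ) + 1 / 2) (m (k.1 + 1)) z) := by
  rw [xGegenC]
  set B := rMat ℓ (n + 1) (fun a => if a ≤ n then m a else i)
        (fun a => if a ≤ n then t a else 0) z with hB
  have hcc : ∀ k l : Fin n, B k.castSucc l.castSucc = rMat ℓ n m t z k l := by
    intro k l
    simp [hB, rMat]
  have hcl : ∀ k : Fin n, B k.castSucc (Fin.last n) = 0 := by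
    intro k
    simp [hB, rMat, (Fin.castSucc_lt_last k).ne]
  have hlc : ∀ l : Fin n, B (Fin.last n) l.castSucc =
      t (l.1 + 1) * rhoGegen ℓ i (m (l.1 + 1)) z := by
    intro l
    simp [hB, rMat, (Fin.castSucc_lt_last l).ne']
  have hll : B (Fin.last n) (Fin.last n) = 1 := by
    simp [hB, rMat]
  have hdet : B.det = tauMat ℓ n m t z := by
    rw [Matrix.det_succ_column B (Fin.last n), Fin.sum_univ_castSucc]
    simp only [hcl, hll, mul_zero, zero_mul, Finset.sum_const_zero, zero_add, mul_one]
    have hsub : B.submatrix (Fin.last n).succAbove (Fin.last n).succAbove = rMat ℓ n m t z := by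
      ext k l
      simp [hcc]
    rw [hsub, Even.neg_one_pow ⟨n, by simp⟩, one_mul, tauMat]
  set p : Fin (n + 1) → ℝ := Fin.snoc (α := fun _ => ℝ) (fun k => -(t (k.1 + 1) * y k)) 1 with hp
  have hpc : ∀ k : Fin n, p k.castSucc = -(t (k.1 + 1) * y k) := fun k => by simp [hp]
  have hpl : p (Fin.last n) = 1 := by simp [hp]
  have hpB : Matrix.vecMul p B = Pi.single (Fin.last n) 1 := by
    ext l
    simp only [Matrix.vecMul, dotProduct, Fin.sum_univ_castSucc, hpc, hpl]
    induction l using Fin.lastCases with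
    | last => simp [hcl, hll]
    | cast l =>
      simp only [hcc, hlc, one_mul]
      rw [Pi.single_eq_of_ne (Fin.castSucc_lt_last l).ne]
      have hyl := congrFun hy l
      rw [rMat_mulVec] at hyl
      simp only [rMat, Matrix.of_apply, mul_add, Finset.sum_add_distrib, mul_ite, mul_one,
        mul_zero, Finset.sum_ite_eq', Finset.mem_univ, if_true]
      have e : ∑ k : Fin n, -(t (k.1 + 1) * y k) *
          (t (l.1 + 1) * rhoGegen ℓ (m (k.1 + 1)) (m (l.1 + 1)) z) =
          -(t (l.1 + 1) * ∑ k : Fin n,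
            rhoGegen ℓ (m (l.1 + 1)) (m (k.1 + 1)) z * (t (k.1 + 1) * y k)) := by
        rw [Finset.mul_sum, ← Finset.sum_neg_distrib]
        refine Finset.sum_congr rfl fun k _ => ?_
        rw [rhoGegen_comm ℓ (m (k.1 + 1))]; ring
      rw [e, rhoGegen_comm ℓ i]
      linear_combination (-t (l.1 + 1)) * hyl
  have hadj : ∀ j, B.adjugate (Fin.last n) j = tauMat ℓ n m t z * p j := by
    intro j
    have h : Matrix.vecMul (Matrix.vecMul p B) B.adjugate = B.det • p := by
      rw [Matrix.vecMul_vecMul, Matrix.mul_adjugate, Matrix.vecMul_smul, Matrix.vecMul_one]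
    rw [hpB, hdet, Matrix.single_one_vecMul] at h
    exact congrFun h j
  simp only [hadj, Fin.sum_univ_castSucc, hpc, hpl]
  have hle : ∀ k : Fin n, k.1 + 1 ≤ n := fun k => k.2
  simp only [Fin.val_castSucc, Fin.val_last, hle, if_true, Nat.succ_le_iff, lt_irrefl, if_false]
  rw [mul_sub, Finset.mul_sum, sub_eq_neg_add, ← Finset.sum_neg_distrib, mul_one]
  congr 1
  exact Finset.sum_congr rfl fun k _ => by ring

theorem differentiableAt_matrix_det {ι : Type*} [Fintype ι] [DecidableEq ι]
    {A : ℝ → Matrix ι ι ℝ} {z : ℝ} (h : ∀ k l, DifferentiableAt ℝ (fun z => A z k l) z) :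
    DifferentiableAt ℝ (fun z => (A z).det) z := by
  simp only [Matrix.det_apply]
  exact DifferentiableAt.fun_sum fun σ _ =>
    (DifferentiableAt.fun_finsetProd fun k _ => h (σ k) k).const_smul _

theorem differentiableAt_matrix_adjugate {ι : Type*} [Fintype ι] [DecidableEq ι]
    {A : ℝ → Matrix ι ι ℝ} {z : ℝ} (h : ∀ k l, DifferentiableAt ℝ (fun z => A z k l) z)
    (i j : ι) : DifferentiableAt ℝ (fun z => (A z).adjugate i j) z := by
  simp only [Matrix.adjugate_apply]
  refine differentiableAt_matrix_det fun k l => ?_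
  simp only [Matrix.updateRow_apply]
  split_ifs
  · exact differentiableAt_const _
  · exact h k l

theorem differentiableAt_rMat (ℓ n : ℕ) (m : ℕ → ℕ) (t : ℕ → ℝ) (z : ℝ) (k l : Fin n) :
    DifferentiableAt ℝ (fun z => rMat ℓ n m t z k l) z := by
  simp only [rMat, Matrix.of_apply]
  exact ((hasDerivAt_rhoGegen ℓ _ _ z).differentiableAt.const_mul _).const_add _

/-- If `(1 + ρ T) y = a` with `ρ` symmetric is differentiated along `ρ' = w c cᵀ`, `a' = w d c`,
then the derivative of `aᵀ T y` only involves `S = cᵀ T y`. -/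
theorem sum_deriv_eq_of_rank_one {ι : Type*} [Fintype ι] (ρ : ι → ι → ℝ)
    (hρ : ∀ k l, ρ k l = ρ l k) (t a y y' c : ι → ℝ) (d w : ℝ)
    (hy : ∀ k, y k + ∑ l, ρ k l * (t l * y l) = a k)
    (hy' : ∀ k, y' k + ∑ l, (c k * c l * w * (t l * y l) + ρ k l * (t l * y' l)) = c k * d * w) :
    ∑ k, (c k * d * w * (t k * y k) + a k * (t k * y' k)) =
      2 * d * w * (∑ k, t k * y k * c k) - w * (∑ k, t k * y k * c k) ^ 2 := by
  set S := ∑ k, t k * y k * c k with hS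
  have h1 : ∑ k, c k * d * w * (t k * y k) = d * w * S := by
    rw [hS, Finset.mul_sum]
    exact Finset.sum_congr rfl fun k _ => by ring
  have h2 : ∀ k, y' k + ∑ l, ρ k l * (t l * y' l) = c k * d * w - c k * w * S := by
    intro k
    have e : ∑ l, c k * c l * w * (t l * y l) = c k * w * S := by
      rw [hS, Finset.mul_sum]
      exact Finset.sum_congr rfl fun l _ => by ring
    have h := hy' k
    rw [Finset.sum_add_distrib, e] at h
    linarith
  have h3 : ∑ k, a k * (t k * y' k) = ∑ k, t k * y k * (y' k + ∑ l, ρ k l * (t l * y' l)) := by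
    simp only [← hy, add_mul, mul_add, Finset.sum_add_distrib, Finset.sum_mul, Finset.mul_sum]
    congr 1
    · exact Finset.sum_congr rfl fun k _ => by ring
    · rw [Finset.sum_comm]
      refine Finset.sum_congr rfl fun k _ => Finset.sum_congr rfl fun l _ => ?_
      rw [hρ l k]; ring
  have h4 : ∑ k, t k * y k * (c k * d * w - c k * w * S) = (d * w - w * S) * S := by
    nth_rw 3 [hS]
    rw [Finset.mul_sum]
    exact Finset.sum_congr rfl fun k _ => by ring
  rw [Finset.sum_add_distrib, h1, h3, Finset.sum_congr rfl fun k _ => by rw [h2 k], h4]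
  ring

theorem exists_integral_xGegenC_sq (ℓ n : ℕ) (m : ℕ → ℕ) (t : ℕ → ℝ) (i : ℕ)
    (hτ : ∀ z ∈ Set.Icc (-1 : ℝ) 1, tauMat ℓ n m t z ≠ 0) :
    ∃ y : Fin n → ℝ,
      ((rMat ℓ n m t 1).mulVec y = fun k => rhoGegen ℓ (m (k.1 + 1)) i 1) ∧
      ∫ z in (-1 : ℝ)..1,
        (xGegenC ℓ n m t i z) ^ 2 * (1 - z ^ 2) ^ ℓ / (tauMat ℓ n m t z) ^ 2 =
      nuGegen ℓ i - ∑ k : Fin n, rhoGegen ℓ (m (k.1 + 1)) i 1 * (t (k.1 + 1) * y k) := by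
  set a : Fin n → ℝ → ℝ := fun k z => rhoGegen ℓ (m (k.1 + 1)) i z with ha
  set y : Fin n → ℝ → ℝ := fun k z =>
    (tauMat ℓ n m t z)⁻¹ * ∑ l, (rMat ℓ n m t z).adjugate k l * a l z with hydef
  have hRy : ∀ z, tauMat ℓ n m t z ≠ 0 →
      (rMat ℓ n m t z).mulVec (fun k => y k z) = fun k => a k z := by
    intro z hz
    have e : (fun k => y k z) = (tauMat ℓ n m t z)⁻¹ •
        (rMat ℓ n m t z).adjugate.mulVec (fun k => a k z) := by
      ext k; simp [hydef, Matrix.mulVec, dotProduct]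
    rw [e, Matrix.mulVec_smul, Matrix.mulVec_mulVec, Matrix.mul_adjugate, Matrix.smul_mulVec,
      Matrix.one_mulVec, smul_smul]
    have : (tauMat ℓ n m t z)⁻¹ * (rMat ℓ n m t z).det = 1 := inv_mul_cancel₀ hz
    rw [this, one_smul]
  have hτd : ∀ z, DifferentiableAt ℝ (tauMat ℓ n m t) z := fun z =>
    differentiableAt_matrix_det (differentiableAt_rMat ℓ n m t z)
  have had : ∀ k z, HasDerivAt (a k) (gegenC ((ℓ : ℝ) + 1 / 2) (m (k.1 + 1)) z *
      gegenC ((ℓ : ℝ) + 1 / 2) i z * (1 - z ^ 2) ^ ℓ) z := fun k z =>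
    hasDerivAt_rhoGegen ℓ _ _ z
  have hyd : ∀ k z, tauMat ℓ n m t z ≠ 0 → DifferentiableAt ℝ (y k) z := fun k z hz =>
    ((hτd z).inv hz).mul (DifferentiableAt.fun_sum fun l _ =>
      (differentiableAt_matrix_adjugate (differentiableAt_rMat ℓ n m t z) k l).mul
        (had l z).differentiableAt)
  set D : ℝ → ℝ := fun z => (1 - z ^ 2) ^ ℓ * (gegenC ((ℓ : ℝ) + 1 / 2) i z -
    ∑ k : Fin n, t (k.1 + 1) * y k z * gegenC ((ℓ : ℝ) + 1 / 2) (m (k.1 + 1)) z) ^ 2 with hD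
  set F : ℝ → ℝ := fun z => rhoGegen ℓ i i z - ∑ k : Fin n, a k z * (t (k.1 + 1) * y k z) with hF
  have hFd : ∀ z, tauMat ℓ n m t z ≠ 0 → HasDerivAt F (D z) z := by
    intro z hz
    have h := (hasDerivAt_rhoGegen ℓ i i z).sub
      (HasDerivAt.fun_sum (u := Finset.univ) fun (k : Fin n) _ =>
        (had k z).mul ((hyd k z hz).hasDerivAt.const_mul (t (k.1 + 1))))
    refine h.congr_deriv ?_
    have hy1 : ∀ k : Fin n, y k z + ∑ l : Fin n, rhoGegen ℓ (m (k.1 + 1)) (m (l.1 + 1)) z *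
        (t (l.1 + 1) * y l z) = a k z := fun k => by
      have h1 := congrFun (hRy z hz) k
      rw [rMat_mulVec] at h1
      exact h1
    have hy2 : ∀ k : Fin n, deriv (y k) z + ∑ l : Fin n,
        (gegenC ((ℓ : ℝ) + 1 / 2) (m (k.1 + 1)) z * gegenC ((ℓ : ℝ) + 1 / 2) (m (l.1 + 1)) z *
          (1 - z ^ 2) ^ ℓ * (t (l.1 + 1) * y l z) +
          rhoGegen ℓ (m (k.1 + 1)) (m (l.1 + 1)) z * (t (l.1 + 1) * deriv (y l) z)) =
        gegenC ((ℓ : ℝ) + 1 / 2) (m (k.1 + 1)) z * gegenC ((ℓ : ℝ) + 1 / 2) i z *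
          (1 - z ^ 2) ^ ℓ := by
      intro k
      have h1 := (hyd k z hz).hasDerivAt.add
        (HasDerivAt.fun_sum (u := Finset.univ) fun (l : Fin n) _ =>
          (hasDerivAt_rhoGegen ℓ (m (k.1 + 1)) (m (l.1 + 1)) z).mul
            ((hyd l z hz).hasDerivAt.const_mul (t (l.1 + 1))))
      refine h1.unique ((had k z).congr_of_eventuallyEq ?_)
      filter_upwards [(hτd z).continuousAt.eventually_ne hz] with u hu
      have h2 := congrFun (hRy u hu) k
      rw [rMat_mulVec] at h2
      exact h2
    have key := sum_deriv_eq_of_rank_one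
      (fun k l : Fin n => rhoGegen ℓ (m (k.1 + 1)) (m (l.1 + 1)) z)
      (fun k l => rhoGegen_comm _ _ _ _) (fun k => t (k.1 + 1)) (fun k => a k z) (fun k => y k z)
      (fun k => deriv (y k) z) (fun k => gegenC ((ℓ : ℝ) + 1 / 2) (m (k.1 + 1)) z)
      (gegenC ((ℓ : ℝ) + 1 / 2) i z) ((1 - z ^ 2) ^ ℓ) hy1 hy2
    rw [key]
    simp only [hD]
    ring
  have huIcc : Set.uIcc (-1 : ℝ) 1 = Set.Icc (-1) 1 := Set.uIcc_of_le (by norm_num)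
  have hDc : ContinuousOn D (Set.uIcc (-1) 1) := by
    rw [huIcc]
    intro z hz
    refine ContinuousAt.continuousWithinAt ?_
    have h1 : ContinuousAt (fun z => ∑ k : Fin n, t (k.1 + 1) * y k z *
        gegenC ((ℓ : ℝ) + 1 / 2) (m (k.1 + 1)) z) z :=
      tendsto_finsetSum _ fun k _ => ((continuousAt_const.mul
        (hyd k z (hτ z hz)).continuousAt).mul (continuous_gegenC _ _).continuousAt)
    have h2 : ContinuousAt (fun z : ℝ => (1 - z ^ 2) ^ ℓ) z := by fun_prop
    exact h2.mul (((continuous_gegenC _ _).continuousAt.sub h1).pow 2)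
  have hint := intervalIntegral.integral_eq_sub_of_hasDerivAt
    (fun z hz => hFd z (hτ z (huIcc ▸ hz))) hDc.intervalIntegrable
  refine ⟨fun k => y k 1, hRy 1 (hτ 1 (by norm_num)), ?_⟩
  have hF0 : F (-1) = 0 := by simp [hF, ha, rhoGegen_neg_one]
  rw [hF0, sub_zero] at hint
  rw [← rhoGegen_one_self]
  refine Eq.trans (intervalIntegral.integral_congr fun z hz => ?_) hint
  have hz' := hτ z (huIcc ▸ hz)
  simp only [hD]
  rw [xGegenC_eq ℓ n m t i z (fun k => y k z) (hRy z hz')]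
  field_simp

theorem integral_xGegenC_sq_of_mem (ℓ n : ℕ) (m : ℕ → ℕ) (t : ℕ → ℝ)
    (hinj : Function.Injective fun k : Fin n => m (k.1 + 1))
    (hτ : ∀ z ∈ Set.Icc (-1 : ℝ) 1, tauMat ℓ n m t z ≠ 0) {j : ℕ} (hj : j ∈ Finset.Icc 1 n) :
    1 + t j * nuGegen ℓ (m j) ≠ 0 ∧
      ∫ z in (-1 : ℝ)..1,
        (xGegenC ℓ n m t (m j) z) ^ 2 * (1 - z ^ 2) ^ ℓ / (tauMat ℓ n m t z) ^ 2 =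
      nuGegen ℓ (m j) / (1 + t j * nuGegen ℓ (m j)) := by
  obtain ⟨y, hy, hval⟩ := exists_integral_xGegenC_sq ℓ n m t (m j) hτ
  obtain ⟨k, rfl⟩ : ∃ k : Fin n, k.1 + 1 = j := by
    rw [Finset.mem_Icc] at hj
    exact ⟨⟨j - 1, by omega⟩, by simp only; omega⟩
  have hone : ∀ p q : Fin n, rhoGegen ℓ (m (p.1 + 1)) (m (q.1 + 1)) 1 =
      if p = q then nuGegen ℓ (m (p.1 + 1)) else 0 := rhoMat_one ℓ n m hinj
  have hyk := congrFun hy k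
  rw [rMat_mulVec] at hyk
  simp only [hone, ite_mul, zero_mul, Finset.sum_ite_eq, Finset.sum_ite_eq', Finset.mem_univ,
    if_true] at hyk hval
  have hν := (nuGegen_pos ℓ (m (k.1 + 1))).ne'
  have hne : 1 + t (k.1 + 1) * nuGegen ℓ (m (k.1 + 1)) ≠ 0 := by
    intro h0
    exact hν (by rw [← hyk]; linear_combination y k * h0)
  refine ⟨hne, ?_⟩
  rw [hval, eq_div_iff hne]
  linear_combination (-nuGegen ℓ (m (k.1 + 1)) * t (k.1 + 1)) * hyk

/-- (1) `τ_m` is nonvanishing on `[-1,1]` iff `t_j > -ν_{m_j}⁻¹` for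
all `j`; (2) under this condition, the exceptional Gegenbauer polynomials of the
second kind have squared norms `ν_i/(1 + δ_{i,m} t_{j(i)} ν_i)` with respect to the
exceptional weight `(1-z²)^ℓ/τ_m²`. -/
theorem statement18 (ℓ : ℕ) (n : ℕ) (hn : 1 ≤ n) (m : ℕ → ℕ) (t : ℕ → ℝ)
    (hdist : ∀ j ∈ Finset.Icc 1 n, ∀ k ∈ Finset.Icc 1 n, j ≠ k → m j ≠ m k) :
    ((∀ z ∈ Set.Icc (-1 : ℝ) 1, tauMat ℓ n m t z ≠ 0)
      ↔ (∀ j ∈ Finset.Icc 1 n, t j > -(nuGegen ℓ (m j))⁻¹)) ∧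
    ((∀ j ∈ Finset.Icc 1 n, t j > -(nuGegen ℓ (m j))⁻¹) →
      ∀ i : ℕ,
        ((∀ j ∈ Finset.Icc 1 n, m j ≠ i) →
          (∫ z in (-1 : ℝ)..1,
            (xGegenC ℓ n m t i z) ^ 2 * (1 - z ^ 2) ^ ℓ / (tauMat ℓ n m t z) ^ 2)
            = nuGegen ℓ i) ∧
        (∀ j ∈ Finset.Icc 1 n, m j = i →
          (∫ z in (-1 : ℝ)..1,
            (xGegenC ℓ n m t i z) ^ 2 * (1 - z ^ 2) ^ ℓ / (tauMat ℓ n m t z) ^ 2)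
            = nuGegen ℓ i / (1 + t j * nuGegen ℓ i))) := by
  have hinj : Function.Injective fun k : Fin n => m (k.1 + 1) := by
    intro k l hkl
    by_contra hne
    exact hdist (k.1 + 1) (Finset.mem_Icc.2 ⟨by omega, k.2⟩) (l.1 + 1)
      (Finset.mem_Icc.2 ⟨by omega, l.2⟩) (fun h => hne (Fin.ext (by omega))) hkl
  have hto : (∀ j ∈ Finset.Icc 1 n, t j > -(nuGegen ℓ (m j))⁻¹) →
      ∀ z ∈ Set.Icc (-1 : ℝ) 1, tauMat ℓ n m t z ≠ 0 := fun h z hz =>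
    tauMat_ne_zero ℓ n m t hinj
      (fun k => h (k.1 + 1) (Finset.mem_Icc.2 ⟨by omega, k.2⟩)) hz
  refine ⟨⟨fun hτ j hj => ?_, hto⟩, fun h i => ⟨fun hi => ?_, fun j hj hij => ?_⟩⟩
  · obtain ⟨hne, hval⟩ := integral_xGegenC_sq_of_mem ℓ n m t hinj hτ hj
    have hν := nuGegen_pos ℓ (m j)
    have hnn : 0 ≤ nuGegen ℓ (m j) / (1 + t j * nuGegen ℓ (m j)) := by
      rw [← hval]
      refine intervalIntegral.integral_nonneg (by norm_num) fun z hz => ?_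
      have : 0 ≤ 1 - z ^ 2 := by nlinarith [hz.1, hz.2]
      positivity
    have hpos : 0 < 1 + t j * nuGegen ℓ (m j) := by
      refine lt_of_le_of_ne ?_ hne.symm
      by_contra hlt
      exact absurd hnn (not_le.2 (div_neg_of_pos_of_neg hν (not_le.1 hlt)))
    have hmul : 0 < (1 + t j * nuGegen ℓ (m j)) * (nuGegen ℓ (m j))⁻¹ :=
      mul_pos hpos (inv_pos.2 hν)
    rw [add_mul, one_mul, mul_assoc, mul_inv_cancel₀ hν.ne', mul_one] at hmul
    linarith
  · obtain ⟨y, -, hval⟩ := exists_integral_xGegenC_sq ℓ n m t i (hto h)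
    rw [hval, Finset.sum_eq_zero, sub_zero]
    intro k _
    rw [rhoGegen_one_of_ne ℓ (hi (k.1 + 1) (Finset.mem_Icc.2 ⟨by omega, k.2⟩)), zero_mul]
  · subst hij
    exact (integral_xGegenC_sq_of_mem ℓ n m t hinj (hto h) hj).2
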